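/- Let (W,U,N) be a polarity, ε an order type over n, R a g-type relation with order type ε, and 1 ≤ i ≤ n with ε(i) = ∂. Let X_j ⊆ W be Galois-stable for every j ≠ i, and let 𝒳 be any family of Galois-stable subsets of W. Then ⋂_{Z ∈ 𝒳} g_R(X̄ⁱ_Z) = g_R(X̄ⁱ_{⋁𝒳}), where ⋁𝒳 = ((⋃𝒳)↑)↓. (Proposition 3.7, case g with ε(i) = ∂: g_R turns arbitrary joins in its i-th coordinate into meets.) -/

import Mathlib

universe u

/-- For `X ⊆ W`, `up N X = X↑ = {u ∈ U : N x u for all x ∈ X}`. -/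
def up {W U : Type u} (N : W → U → Prop) (X : Set W) : Set U := {u | ∀ x ∈ X, N x u}

/-- For `Y ⊆ U`, `dn N Y = Y↓ = {w ∈ W : N w u for all u ∈ Y}`. -/
def dn {W U : Type u} (N : W → U → Prop) (Y : Set U) : Set W := {w | ∀ u ∈ Y, N w u}

/-- A subset `X ⊆ W` is Galois-stable if `X = (X↑)↓`. -/
def stableW {W U : Type u} (N : W → U → Prop) (X : Set W) : Prop := X = dn N (up N X)

/-- A subset `Y ⊆ U` is Galois-stable if `Y = (Y↓)↑`. -/
def stableU {W U : Type u} (N : W → U → Prop) (Y : Set U) : Prop := Y = up N (dn N Y)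

/-- `coordType W U b` is `W` if `b = true` (order type 1) and `U` if `b = false` (order type ∂). -/
def coordType (W U : Type u) (b : Bool) : Type u := cond b W U

/-- `S⁰[C̄] = {a : (a, b̄) ∈ S for all b̄ ∈ C₁ × ⋯ × Cₙ}`. -/
def rel0 {A : Type u} {n : ℕ} {B : Fin n → Type u} (S : A → (∀ i, B i) → Prop)
    (C : ∀ i, Set (B i)) : Set A :=
  {a | ∀ b : ∀ i, B i, (∀ i, b i ∈ C i) → S a b}

/-- `Sⁱ[A', C̄ⁱ] = {x ∈ B i : (a, b̄ⁱ_x) ∈ S for all a ∈ A' and all b_j ∈ C_j (j ≠ i)}`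
(the `i`-th entry of `C` is ignored). -/
def reli {A : Type u} {n : ℕ} {B : Fin n → Type u} (S : A → (∀ i, B i) → Prop)
    (i : Fin n) (A' : Set A) (C : ∀ j, Set (B j)) : Set (B i) :=
  {x | ∀ a ∈ A', ∀ b : ∀ j, B j, (∀ j, j ≠ i → b j ∈ C j) → S a (Function.update b i x)}

/-- Galois-stability for a subset of `U^ε(i)` (as a subset of `U` or of `W` accordingly). -/
def coordStableG {W U : Type u} (N : W → U → Prop) :
    (b : Bool) → Set (coordType U W b) → Prop
  | true, Y => stableU N Y
  | false, X => stableW N X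

/-- `R` is a g-type relation with order type `ε`: `R ⊆ W × U^ε(1) × ⋯ × U^ε(n)` such that the
sets `R⁰[{ū}]` and `Rⁱ[{w}, {ū}ⁱ]` are all Galois-stable. -/
def isGType {W U : Type u} (N : W → U → Prop) {n : ℕ} (ε : Fin n → Bool)
    (R : W → (∀ i, coordType U W (ε i)) → Prop) : Prop :=
  (∀ v : ∀ i, coordType U W (ε i),
    stableW N (rel0 R fun i => ({v i} : Set (coordType U W (ε i))))) ∧
  (∀ (w : W) (v : ∀ i, coordType U W (ε i)) (i : Fin n),
    coordStableG N (ε i) (reli R i {w} fun j => ({v j} : Set (coordType U W (ε j)))))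

/-- The `i`-th entry of `X̄^ε`: `X_i↑` if `ε(i) = 1` and `X_i` if `ε(i) = ∂`. -/
def epsCoordG {W U : Type u} (N : W → U → Prop) :
    (b : Bool) → Set W → Set (coordType U W b)
  | true, X => up N X
  | false, X => X

/-- `g_R(X̄) := R⁰[X̄^ε]`. -/
def gR {W U : Type u} (N : W → U → Prop) {n : ℕ} (ε : Fin n → Bool)
    (R : W → (∀ i, coordType U W (ε i)) → Prop) (X : Fin n → Set W) : Set W :=
  rel0 R fun i => epsCoordG N (ε i) (X i)

/-!
The relation `R` residuates in each coordinate: `A ⊆ R⁰[C̄ⁱ_D]` iff `D ⊆ Rⁱ[A, C̄ⁱ]`. Each set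
`Rⁱ[A, C̄ⁱ]` is an intersection of the sections `Rⁱ[{w}, {v̄}ⁱ]`, hence Galois-stable. When
`ε(i) = ∂`, therefore, `w ∈ g_R(X̄ⁱ_Z)` says that `Z` is a subset of the Galois-stable set
`Rⁱ[{w}, C̄ⁱ]`, where `C̄ = X̄^ε`, and a Galois-stable set contains the join of a family iff it
contains every member.
-/

theorem stableW_iff_isExtent {W U : Type u} {N : W → U → Prop} {X : Set W} :
    stableW N X ↔ Order.IsExtent N X :=
  eq_comm.trans Order.isExtent_iff.symm

theorem stableU_iff_isIntent {W U : Type u} {N : W → U → Prop} {Y : Set U} :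
    stableU N Y ↔ Order.IsIntent N Y :=
  eq_comm.trans Order.isIntent_iff.symm

theorem dn_up_subset_iff {W U : Type u} {N : W → U → Prop} {X Y : Set W} (hY : stableW N Y) :
    dn N (up N X) ⊆ Y ↔ X ⊆ Y :=
  ⟨(subset_lowerPolar_upperPolar N X).trans,
    (stableW_iff_isExtent.1 hY).lowerPolar_upperPolar_subset⟩

section Relation

variable {A : Type u} {n : ℕ} {B : Fin n → Type u}

theorem subset_rel0_update_iff (S : A → (∀ i, B i) → Prop) (i : Fin n) (A' : Set A)
    (C : ∀ j, Set (B j)) (D : Set (B i)) :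
    A' ⊆ rel0 S (Function.update C i D) ↔ D ⊆ reli S i A' C := by
  have mem_box (b : ∀ j, B j) :
      (∀ j, b j ∈ Function.update C i D j) ↔ b i ∈ D ∧ ∀ j, j ≠ i → b j ∈ C j :=
    Function.forall_update_iff C fun j E => b j ∈ E
  constructor
  · intro h x hx a ha b hb
    refine h ha _ ((mem_box _).2 ⟨?_, fun j hj => ?_⟩)
    · rwa [Function.update_self]
    · rw [Function.update_of_ne hj]
      exact hb j hj
  · intro h a ha b hb
    obtain ⟨hbi, hbC⟩ := (mem_box b).1 hb
    rw [← Function.update_eq_self i b]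
    exact h hbi a ha b hbC

theorem reli_eq_iInter_reli_singleton (S : A → (∀ i, B i) → Prop) (i : Fin n) (A' : Set A)
    (C : ∀ j, Set (B j)) :
    reli S i A' C =
      ⋂ (a ∈ A') (v : ∀ j, B j) (_ : ∀ j, j ≠ i → v j ∈ C j), reli S i {a} fun j => {v j} := by
  ext x
  simp only [Set.mem_iInter]
  constructor
  · rintro h a ha v hv _ rfl b hb
    exact h _ ha b fun j hj => (hb j hj : b j = v j) ▸ hv j hj
  · exact fun h a ha v hv => h a ha v hv a rfl v fun _ _ => rfl

end Relation

section GType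

variable {W U : Type u} {N : W → U → Prop}

theorem coordStableG_iInter {ι : Sort*} {b : Bool} {Y : ι → Set (coordType U W b)}
    (hY : ∀ k, coordStableG N b (Y k)) : coordStableG N b (⋂ k, Y k) := by
  cases b with
  | true => exact stableU_iff_isIntent.2 (.iInter Y fun k => stableU_iff_isIntent.1 (hY k))
  | false => exact stableW_iff_isExtent.2 (.iInter Y fun k => stableW_iff_isExtent.1 (hY k))

theorem epsCoordG_dn_up_sUnion_subset_iff {b : Bool} (hb : b = false)
    {Y : Set (coordType U W b)} (hY : coordStableG N b Y) (𝒳 : Set (Set W)) :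
    epsCoordG N b (dn N (up N (⋃₀ 𝒳))) ⊆ Y ↔ ∀ Z ∈ 𝒳, epsCoordG N b Z ⊆ Y := by
  subst hb
  exact (dn_up_subset_iff hY).trans Set.sUnion_subset_iff

variable {n : ℕ} {ε : Fin n → Bool} {R : W → (∀ i, coordType U W (ε i)) → Prop} {i : Fin n}

theorem coordStableG_reli
    (hR : ∀ (w : W) (v : ∀ j, coordType U W (ε j)),
      coordStableG N (ε i) (reli R i {w} fun j => {v j}))
    (A' : Set W) (C : ∀ j, Set (coordType U W (ε j))) :
    coordStableG N (ε i) (reli R i A' C) := by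
  rw [reli_eq_iInter_reli_singleton]
  exact coordStableG_iInter fun w => coordStableG_iInter fun _ =>
    coordStableG_iInter fun v => coordStableG_iInter fun _ => hR w v

theorem mem_gR_update_iff {X : Fin n → Set W} {Z : Set W} {w : W} :
    w ∈ gR N ε R (Function.update X i Z) ↔
      epsCoordG N (ε i) Z ⊆ reli R i {w} fun j => epsCoordG N (ε j) (X j) := by
  have epsCoordG_update : (fun j => epsCoordG N (ε j) (Function.update X i Z j)) =
      Function.update (fun j => epsCoordG N (ε j) (X j)) i (epsCoordG N (ε i) Z) :=
    funext (Function.apply_update (fun j => epsCoordG N (ε j)) X i Z)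
  rw [gR, epsCoordG_update, ← Set.singleton_subset_iff, subset_rel0_update_iff]

theorem gR_joins_to_meets_general (hi : ε i = false)
    (hR : ∀ (w : W) (v : ∀ j, coordType U W (ε j)),
      coordStableG N (ε i) (reli R i {w} fun j => {v j}))
    (X : Fin n → Set W) (𝒳 : Set (Set W)) :
    (⋂ Z ∈ 𝒳, gR N ε R (Function.update X i Z))
      = gR N ε R (Function.update X i (dn N (up N (⋃₀ 𝒳)))) := by
  ext w
  simp only [Set.mem_iInter, mem_gR_update_iff]
  exact (epsCoordG_dn_up_sUnion_subset_iff hi (coordStableG_reli hR {w} _) 𝒳).symm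

end GType

/-- Proposition 3.7, case `g` with `ε(i) = ∂`: `g_R` turns arbitrary joins in its `i`-th
coordinate into meets: `⋂_{Z ∈ 𝒳} g_R(X̄ⁱ_Z) = g_R(X̄ⁱ_{⋁𝒳})`, where `⋁𝒳 = ((⋃𝒳)↑)↓`. -/
theorem gR_joins_to_meets {W U : Type u} (N : W → U → Prop) {n : ℕ} (ε : Fin n → Bool)
    (R : W → (∀ i, coordType U W (ε i)) → Prop) (hR : isGType N ε R)
    (i : Fin n) (hi : ε i = false)
    (X : Fin n → Set W) (hX : ∀ j, j ≠ i → stableW N (X j))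
    (𝒳 : Set (Set W)) (h𝒳 : ∀ Z ∈ 𝒳, stableW N Z) :
    (⋂ Z ∈ 𝒳, gR N ε R (Function.update X i Z))
      = gR N ε R (Function.update X i (dn N (up N (⋃₀ 𝒳)))) :=
  gR_joins_to_meets_general hi (fun w v => hR.2 w v i) X 𝒳
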